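/- A finite-dimensional Leibniz algebra L over a field of characteristic zero is solvable if and only if every maximal subalgebra of L is a weak c-ideal of L. -/

import Mathlib

/-!
Suppose `L` is solvable, `M` is maximal with core `M_L`, and `k` is the last index with
`L⁽ᵏ⁾ ⊄ M_L`. The ideal `C = L⁽ᵏ⁾` satisfies `M + C = L` by maximality, and `[C, C] ⊆ M_L` makes
`M ∩ C` an ideal of `L`, hence part of `M_L`; so `M` is even a c-ideal
(`isWeakCIdeal_of_solvable`).

Conversely, suppose `L` is not solvable and let `P ≠ 0` be its perfect residual, the stationary term
of the derived series. The hypothesis on maximal subalgebras passes to quotients, so after factoring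
out an ideal maximal among those not containing `P`, every nonzero ideal contains `P`
(`solvable_of_isWeakCIdeal`). The Leibniz kernel is an abelian ideal, so it vanishes and `L` is a Lie
algebra. In characteristic zero a solvable subideal lies in a solvable ideal
(`solvable_sup_map_derivation`), and perfect subideals are ideals; therefore every nonzero
*subideal* contains `P` (`perfect_le_subideal`). As `P` is perfect, Engel's theorem provides `x ∈ P`
that is not ad-nilpotent, and its Engel subalgebra `E ∋ x` is proper with `E + P = L`
(`exists_proper_supplement`). A maximal subalgebra `M ⊇ E` does not contain `P`, so its core is zero
and a subideal `C` with `M + C = L`, `M ∩ C = 0` exists. Then `C ≠ 0`, so `P ⊆ C` and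
`0 ≠ x ∈ M ∩ C`, a contradiction (`false_of_perfect_monolith`).
-/

open Submodule

variable {F : Type*} [Field F] {L : Type*} [AddCommGroup L] [Module F L]

/-- `br` is a (right) Leibniz bracket: the right multiplications are derivations. -/
def IsLeibnizBracket (br : L →ₗ[F] L →ₗ[F] L) : Prop :=
  ∀ x y z : L, br x (br y z) = br (br x y) z - br (br x z) y

/-- A symmetric Leibniz bracket: right and left Leibniz, and `[[x,y],[x,y]] = 0`. -/
def IsSymmetricLeibnizBracket (br : L →ₗ[F] L →ₗ[F] L) : Prop :=
  IsLeibnizBracket br ∧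
  (∀ x y z : L, br x (br y z) = br (br x y) z + br y (br x z)) ∧
  (∀ x y : L, br (br x y) (br x y) = 0)

/-- `B` is a subalgebra (a submodule closed under the bracket). -/
def IsSubalg (br : L →ₗ[F] L →ₗ[F] L) (B : Submodule F L) : Prop :=
  ∀ x ∈ B, ∀ y ∈ B, br x y ∈ B

/-- `A` is an ideal of the subalgebra `B`. -/
def IsIdealOf (br : L →ₗ[F] L →ₗ[F] L) (A B : Submodule F L) : Prop :=
  A ≤ B ∧ ∀ x ∈ A, ∀ y ∈ B, br x y ∈ A ∧ br y x ∈ A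

/-- `A` is an ideal of `L`. -/
def IsLeibIdeal (br : L →ₗ[F] L →ₗ[F] L) (A : Submodule F L) : Prop :=
  IsIdealOf br A ⊤

/-- `C` is a subideal of the subalgebra `K`: there is a chain
`C = C_0 ⊆ C_1 ⊆ ... ⊆ C_n = K` with each term an ideal of the next. -/
def IsSubidealOf (br : L →ₗ[F] L →ₗ[F] L) (C K : Submodule F L) : Prop :=
  ∃ (n : ℕ) (ch : ℕ → Submodule F L), ch 0 = C ∧ ch n = K ∧
    ∀ i < n, IsIdealOf br (ch i) (ch (i + 1))

/-- `C` is a subideal of `L`. -/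
def IsSubideal (br : L →ₗ[F] L →ₗ[F] L) (C : Submodule F L) : Prop :=
  IsSubidealOf br C ⊤

/-- The core of `B` in the subalgebra `K`: the largest ideal of `K` contained in `B`. -/
def leibCoreIn (br : L →ₗ[F] L →ₗ[F] L) (K B : Submodule F L) : Submodule F L :=
  sSup {A | IsIdealOf br A K ∧ A ≤ B}

/-- `B_L`, the largest ideal of `L` contained in `B`. -/
def leibCore (br : L →ₗ[F] L →ₗ[F] L) (B : Submodule F L) : Submodule F L :=
  leibCoreIn br ⊤ B

/-- `B` is a c-ideal of `L`. -/
def IsCIdeal (br : L →ₗ[F] L →ₗ[F] L) (B : Submodule F L) : Prop :=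
  IsSubalg br B ∧ ∃ K, IsLeibIdeal br K ∧ B ⊔ K = ⊤ ∧ B ⊓ K ≤ leibCore br B

/-- `B` is a weak c-ideal of the subalgebra `K`. -/
def IsWeakCIdealOf (br : L →ₗ[F] L →ₗ[F] L) (B K : Submodule F L) : Prop :=
  IsSubalg br B ∧ B ≤ K ∧
    ∃ C, IsSubidealOf br C K ∧ B ⊔ C = K ∧ B ⊓ C ≤ leibCoreIn br K B

/-- `B` is a weak c-ideal of `L`. -/
def IsWeakCIdeal (br : L →ₗ[F] L →ₗ[F] L) (B : Submodule F L) : Prop :=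
  IsWeakCIdealOf br B ⊤

/-- The Leibniz kernel `I`, spanned by all squares. -/
def leibnizKernel (br : L →ₗ[F] L →ₗ[F] L) : Submodule F L :=
  Submodule.span F {y | ∃ x : L, y = br x x}

/-- The span of all brackets `[a,b]` with `a ∈ A`, `b ∈ B`. -/
def brSpan (br : L →ₗ[F] L →ₗ[F] L) (A B : Submodule F L) : Submodule F L :=
  Submodule.span F {z | ∃ x ∈ A, ∃ y ∈ B, z = br x y}

/-- The derived series of the subalgebra `U`. -/
def derSeriesOf (br : L →ₗ[F] L →ₗ[F] L) (U : Submodule F L) : ℕ → Submodule F L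
  | 0 => U
  | n + 1 => brSpan br (derSeriesOf br U n) (derSeriesOf br U n)

/-- The subalgebra `U` is solvable. -/
def IsSolvableSub (br : L →ₗ[F] L →ₗ[F] L) (U : Submodule F L) : Prop :=
  ∃ n, derSeriesOf br U n = ⊥

/-- The lower central series of the subalgebra `U`. -/
def lcsOf (br : L →ₗ[F] L →ₗ[F] L) (U : Submodule F L) : ℕ → Submodule F L
  | 0 => U
  | n + 1 => brSpan br (lcsOf br U n) U

/-- The subalgebra `U` is nilpotent. -/
def IsNilpotentSub (br : L →ₗ[F] L →ₗ[F] L) (U : Submodule F L) : Prop :=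
  ∃ n, lcsOf br U n = ⊥

/-- `M` is a maximal (proper) subalgebra of the subalgebra `U`. -/
def IsMaximalSubalgOf (br : L →ₗ[F] L →ₗ[F] L) (M U : Submodule F L) : Prop :=
  IsSubalg br M ∧ M < U ∧ ∀ K, IsSubalg br K → M ≤ K → K ≤ U → K = M ∨ K = U

/-- `M` is a maximal subalgebra of `L`. -/
def IsMaximalSubalg (br : L →ₗ[F] L →ₗ[F] L) (M : Submodule F L) : Prop :=
  IsMaximalSubalgOf br M ⊤

/-- `U` is a maximal nilpotent subalgebra of `L`. -/
def IsMaximalNilpotentSub (br : L →ₗ[F] L →ₗ[F] L) (U : Submodule F L) : Prop :=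
  IsSubalg br U ∧ IsNilpotentSub br U ∧
    ∀ V, IsSubalg br V → IsNilpotentSub br V → U ≤ V → V = U

/-- `H` is a Cartan subalgebra of the subalgebra `S`: a nilpotent subalgebra
that is self-normalizing in `S`. -/
def IsCartanSubalgOf (br : L →ₗ[F] L →ₗ[F] L) (H S : Submodule F L) : Prop :=
  IsSubalg br H ∧ H ≤ S ∧ IsNilpotentSub br H ∧
    ∀ x ∈ S, (∀ c ∈ H, br x c ∈ H ∧ br c x ∈ H) → x ∈ H

/-- `H` is a Cartan subalgebra of `L`. -/
def IsCartanSubalg (br : L →ₗ[F] L →ₗ[F] L) (H : Submodule F L) : Prop :=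
  IsCartanSubalgOf br H ⊤

/-- The Frattini subalgebra of the subalgebra `C`:
the intersection of the maximal subalgebras of `C`. -/
def frattiniIn (br : L →ₗ[F] L →ₗ[F] L) (C : Submodule F L) : Submodule F L :=
  sInf {M | IsMaximalSubalgOf br M C}

/-- The Frattini subalgebra `F(L)`. -/
def frattiniSubalg (br : L →ₗ[F] L →ₗ[F] L) : Submodule F L :=
  frattiniIn br ⊤

/-- The Frattini ideal `φ(L)`. -/
def frattiniIdeal (br : L →ₗ[F] L →ₗ[F] L) : Submodule F L :=
  leibCore br (frattiniSubalg br)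

/-- `L` is supersolvable: there is a chain of ideals of `L` from `0` to `L`
each of codimension one in the next. -/
def IsSupersolvable (br : L →ₗ[F] L →ₗ[F] L) : Prop :=
  ∃ (n : ℕ) (ch : ℕ → Submodule F L), ch 0 = ⊥ ∧ ch n = ⊤ ∧
    (∀ i ≤ n, IsLeibIdeal br (ch i)) ∧
    ∀ i < n, ch i ≤ ch (i + 1) ∧
      Module.finrank F (ch (i + 1)) = Module.finrank F (ch i) + 1

/-- A subalgebra is abelian if all brackets of its elements vanish. -/
def IsAbelianSub (br : L →ₗ[F] L →ₗ[F] L) (A : Submodule F L) : Prop :=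
  ∀ x ∈ A, ∀ y ∈ A, br x y = 0

/-- `A` is a minimal abelian ideal of `L`. -/
def IsMinimalAbelianIdeal (br : L →ₗ[F] L →ₗ[F] L) (A : Submodule F L) : Prop :=
  IsLeibIdeal br A ∧ A ≠ ⊥ ∧ IsAbelianSub br A ∧
    ∀ A', IsLeibIdeal br A' → A' ≤ A → A' = ⊥ ∨ A' = A

/-- The abelian socle `Asoc(L)`: the sum of the minimal abelian ideals of `L`. -/
def abelianSocle (br : L →ₗ[F] L →ₗ[F] L) : Submodule F L :=
  sSup {A | IsMinimalAbelianIdeal br A}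

theorem isLeibIdeal_sSup (br : L →ₗ[F] L →ₗ[F] L) (S : Set (Submodule F L))
    (h : ∀ A ∈ S, IsLeibIdeal br A) : IsLeibIdeal br (sSup S) := by
  refine ⟨le_top, fun x hx y _ => ?_⟩
  let P : Submodule F L :=
    { carrier := {a | br a y ∈ sSup S ∧ br y a ∈ sSup S}
      zero_mem' := by simp
      add_mem' := by
        rintro a b ⟨ha1, ha2⟩ ⟨hb1, hb2⟩
        constructor
        · simpa [map_add, LinearMap.add_apply] using add_mem ha1 hb1
        · simpa [map_add] using add_mem ha2 hb2
      smul_mem' := by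
        rintro c a ⟨ha1, ha2⟩
        constructor
        · simpa [map_smul, LinearMap.smul_apply] using smul_mem _ c ha1
        · simpa [map_smul] using smul_mem _ c ha2 }
  have hP : sSup S ≤ P := by
    refine sSup_le fun A hA a ha => ?_
    exact ⟨le_sSup hA ((h A hA).2 a ha y trivial).1,
           le_sSup hA ((h A hA).2 a ha y trivial).2⟩
  exact hP hx

theorem leibCore_isIdeal (br : L →ₗ[F] L →ₗ[F] L) (B : Submodule F L) :
    IsLeibIdeal br (leibCore br B) :=
  isLeibIdeal_sSup br _ fun _ hA => hA.1

/-- The bracket induced on the quotient of `L` by an ideal `A`. -/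
def quotBr (br : L →ₗ[F] L →ₗ[F] L) (A : Submodule F L) (hA : IsLeibIdeal br A) :
    (L ⧸ A) →ₗ[F] (L ⧸ A) →ₗ[F] (L ⧸ A) :=
  Submodule.liftQ A
    { toFun := fun x => Submodule.liftQ A (A.mkQ.comp (br x))
        (fun a ha => by
          simp only [LinearMap.mem_ker, LinearMap.comp_apply, Submodule.mkQ_apply,
            Submodule.Quotient.mk_eq_zero]
          exact (hA.2 a ha x trivial).2)
      map_add' := fun x y => by
        apply Submodule.linearMap_qext
        ext z
        simp [map_add]
      map_smul' := fun c x => by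
        apply Submodule.linearMap_qext
        ext z
        simp [map_smul] }
    (fun a ha => by
      simp only [LinearMap.mem_ker]
      apply Submodule.linearMap_qext
      ext z
      simp only [LinearMap.coe_mk, AddHom.coe_mk, LinearMap.comp_apply, Submodule.mkQ_apply,
        Submodule.liftQ_apply, LinearMap.zero_comp, LinearMap.zero_apply,
        Submodule.Quotient.mk_eq_zero]
      exact (hA.2 a ha z trivial).1)

/-! ### Ideals, derived series and maximal subalgebras -/

section Ideals

variable {br : L →ₗ[F] L →ₗ[F] L}

theorem br_mem_brSpan {A B : Submodule F L} {x y : L} (hx : x ∈ A) (hy : y ∈ B) :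
    br x y ∈ brSpan br A B :=
  subset_span ⟨x, hx, y, hy, rfl⟩

theorem brSpan_le {A B C : Submodule F L} :
    brSpan br A B ≤ C ↔ ∀ x ∈ A, ∀ y ∈ B, br x y ∈ C := by
  constructor
  · exact fun h x hx y hy => h (br_mem_brSpan hx hy)
  · intro h
    refine span_le.2 ?_
    rintro _ ⟨x, hx, y, hy, rfl⟩
    exact h x hx y hy

theorem brSpan_mono {A B : Submodule F L} (h : A ≤ B) : brSpan br A A ≤ brSpan br B B :=
  brSpan_le.2 fun _ hx _ hy => br_mem_brSpan (h hx) (h hy)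

theorem derSeriesOf_mono {A B : Submodule F L} (h : A ≤ B) (n : ℕ) :
    derSeriesOf br A n ≤ derSeriesOf br B n := by
  induction n with
  | zero => exact h
  | succ n ih => exact brSpan_mono ih

theorem derSeriesOf_add (A : Submodule F L) (m n : ℕ) :
    derSeriesOf br A (m + n) = derSeriesOf br (derSeriesOf br A m) n := by
  induction n with
  | zero => rfl
  | succ n ih =>
    change brSpan br (derSeriesOf br A (m + n)) (derSeriesOf br A (m + n)) = _
    rw [ih]; rfl

/-- A perfect submodule survives in every term of the derived series of anything containing it. -/
theorem le_derSeriesOf_of_perfect {P S : Submodule F L} (hP : brSpan br P P = P) (h : P ≤ S)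
    (n : ℕ) : P ≤ derSeriesOf br S n := by
  induction n with
  | zero => exact h
  | succ n ih => exact hP.ge.trans (brSpan_mono ih)

theorem isIdealOf_self {A : Submodule F L} (h : IsSubalg br A) : IsIdealOf br A A :=
  ⟨le_rfl, fun x hx y hy => ⟨h x hx y hy, h y hy x hx⟩⟩

theorem IsIdealOf.isSubalg {A B : Submodule F L} (h : IsIdealOf br A B) : IsSubalg br A :=
  fun x hx y hy => (h.2 x hx y (h.1 hy)).1

theorem IsIdealOf.brSpan_self (hbr : IsLeibnizBracket br) {A B : Submodule F L}
    (h : IsIdealOf br A B) : IsIdealOf br (brSpan br A A) B := by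
  refine ⟨brSpan_le.2 fun x hx y hy => h.1 (h.isSubalg x hx y hy), fun z hz y hy => ?_⟩
  have h1 : brSpan br A A ≤ (brSpan br A A).comap (br.flip y) := by
    refine brSpan_le.2 fun a ha b hb => ?_
    have e : br (br a b) y = br a (br b y) + br (br a y) b := by rw [hbr a b y]; abel
    rw [mem_comap, LinearMap.flip_apply, e]
    exact add_mem (br_mem_brSpan ha (h.2 b hb y hy).1) (br_mem_brSpan (h.2 a ha y hy).1 hb)
  have h2 : brSpan br A A ≤ (brSpan br A A).comap (br y) := by
    refine brSpan_le.2 fun a ha b hb => ?_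
    rw [mem_comap, hbr y a b]
    exact sub_mem (br_mem_brSpan (h.2 a ha y hy).2 hb) (br_mem_brSpan (h.2 b hb y hy).2 ha)
  exact ⟨h1 hz, h2 hz⟩

theorem IsIdealOf.derSeriesOf (hbr : IsLeibnizBracket br) {A B : Submodule F L}
    (h : IsIdealOf br A B) (n : ℕ) : IsIdealOf br (derSeriesOf br A n) B := by
  induction n with
  | zero => exact h
  | succ n ih => exact ih.brSpan_self hbr

theorem IsIdealOf.derSeriesOf_antitone (hbr : IsLeibnizBracket br) {A B : Submodule F L}
    (h : IsIdealOf br A B) : Antitone (_root_.derSeriesOf br A) :=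
  antitone_nat_of_succ_le fun n =>
    brSpan_le.2 fun x hx y hy => (h.derSeriesOf hbr n).isSubalg x hx y hy

/-- The derived series of an ideal becomes stationary, at a perfect term. -/
theorem IsIdealOf.exists_perfect [FiniteDimensional F L] (hbr : IsLeibnizBracket br)
    {A B : Submodule F L} (h : IsIdealOf br A B) :
    ∃ n, brSpan br (_root_.derSeriesOf br A n) (_root_.derSeriesOf br A n) =
      _root_.derSeriesOf br A n := by
  obtain ⟨n, hn⟩ := IsArtinian.monotone_stabilizes (R := F) (M := L)
    ⟨fun n => OrderDual.toDual (_root_.derSeriesOf br A n),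
      fun _ _ hmn => h.derSeriesOf_antitone hbr hmn⟩
  exact ⟨n, (hn (n + 1) n.le_succ).symm⟩

theorem isLeibIdeal_top : IsLeibIdeal br (⊤ : Submodule F L) :=
  ⟨le_rfl, fun _ _ _ _ => ⟨trivial, trivial⟩⟩

theorem isLeibIdeal_bot : IsLeibIdeal br (⊥ : Submodule F L) := by
  refine ⟨bot_le, fun x hx y _ => ?_⟩
  rw [(mem_bot F).1 hx]
  simp

theorem IsLeibIdeal.sup {A B : Submodule F L} (hA : IsLeibIdeal br A) (hB : IsLeibIdeal br B) :
    IsLeibIdeal br (A ⊔ B) := by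
  rw [← sSup_pair]
  exact isLeibIdeal_sSup br _ (by rintro C (rfl | rfl) <;> assumption)

theorem leibCore_le (B : Submodule F L) : leibCore br B ≤ B := sSup_le fun _ h => h.2

theorem IsLeibIdeal.le_leibCore {A B : Submodule F L} (hA : IsLeibIdeal br A) (h : A ≤ B) :
    A ≤ leibCore br B := le_sSup ⟨hA, h⟩

theorem IsLeibIdeal.isSubalg_sup {A M : Submodule F L} (hA : IsLeibIdeal br A)
    (hM : IsSubalg br M) : IsSubalg br (M ⊔ A) := by
  intro x hx y hy
  obtain ⟨m, hm, a, ha, rfl⟩ := mem_sup.1 hx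
  obtain ⟨m', hm', a', ha', rfl⟩ := mem_sup.1 hy
  have e : br (m + a) (m' + a') = br m m' + (br m a' + br a (m' + a')) := by
    simp only [map_add, LinearMap.add_apply]; abel
  rw [e]
  exact add_mem (mem_sup_left (hM m hm m' hm'))
    (mem_sup_right (add_mem (hA.2 a' ha' m trivial).2 (hA.2 a ha _ trivial).1))

theorem IsMaximalSubalg.sup_eq_top {A M : Submodule F L} (hM : IsMaximalSubalg br M)
    (hA : IsLeibIdeal br A) (h : ¬ A ≤ M) : M ⊔ A = ⊤ :=
  (hM.2.2 _ (hA.isSubalg_sup hM.1) le_sup_left le_top).resolve_left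
    fun e => h (e ▸ le_sup_right)

theorem IsLeibIdeal.isSubideal {A : Submodule F L} (hA : IsLeibIdeal br A) :
    IsSubideal br A := by
  refine ⟨1, fun i => if i = 0 then A else ⊤, rfl, rfl, fun i hi => ?_⟩
  obtain rfl : i = 0 := by omega
  exact hA

/-- With `k` the last index such that `L⁽ᵏ⁾` is not inside the core of `M`, the ideal `L⁽ᵏ⁾` is a
supplement of `M`, and `M ∩ L⁽ᵏ⁾` is an ideal because `[L⁽ᵏ⁾, L⁽ᵏ⁾]` already lies in the core. -/
theorem isWeakCIdeal_of_solvable (hbr : IsLeibnizBracket br) (hL : IsSolvableSub br ⊤)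
    {M : Submodule F L} (hM : IsMaximalSubalg br M) : IsWeakCIdeal br M := by
  classical
  have hex : ∃ n, derSeriesOf br (⊤ : Submodule F L) n ≤ leibCore br M := by
    obtain ⟨n, hn⟩ := hL
    exact ⟨n, hn ▸ bot_le⟩
  have hspec := Nat.find_spec hex
  have hmin := fun m => Nat.find_min (m := m) hex
  have h0 : Nat.find hex ≠ 0 := fun h => by
    rw [h] at hspec
    exact hM.2.1.not_ge (hspec.trans (leibCore_le M))
  obtain ⟨k, hk⟩ := Nat.exists_eq_succ_of_ne_zero h0
  rw [hk] at hspec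
  have hk' := hmin k (by omega)
  set C := derSeriesOf br (⊤ : Submodule F L) k with hC
  have hCi : IsLeibIdeal br C := isLeibIdeal_top.derSeriesOf hbr k
  have hCC : ∀ x ∈ C, ∀ y ∈ C, br x y ∈ M ⊓ C := fun x hx y hy =>
    ⟨leibCore_le M (hspec (br_mem_brSpan hx hy)), hCi.isSubalg x hx y hy⟩
  have hsup : M ⊔ C = ⊤ := hM.sup_eq_top hCi fun h => hk' (hCi.le_leibCore h)
  refine ⟨hM.1, le_top, C, hCi.isSubideal, hsup, IsLeibIdeal.le_leibCore ?_ inf_le_left⟩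
  refine ⟨le_top, fun x hx y _ => ?_⟩
  obtain ⟨m, hm, c, hc, rfl⟩ := mem_sup.1 (hsup.ge (mem_top : y ∈ ⊤))
  simp only [map_add, LinearMap.add_apply]
  exact ⟨add_mem ⟨hM.1 x hx.1 m hm, (hCi.2 x hx.2 m trivial).1⟩ (hCC x hx.2 c hc),
    add_mem ⟨hM.1 m hm x hx.1, (hCi.2 x hx.2 m trivial).2⟩ (hCC c hc x hx.2)⟩

end Ideals

/-! ### Solvable subideals in characteristic zero -/

section Radical

variable {br : L →ₗ[F] L →ₗ[F] L}

open Finset in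
/-- The general Leibniz rule for a derivation of the bilinear product `br`. -/
theorem iterate_derivation {D : L →ₗ[F] L}
    (hD : ∀ a b, D (br a b) = br (D a) b + br a (D b)) (n : ℕ) (a b : L) :
    D^[n] (br a b) =
      ∑ ij ∈ antidiagonal n, n.choose ij.1 • br (D^[ij.1] a) (D^[ij.2] b) := by
  induction n with
  | zero => simp
  | succ n ih =>
    rw [sum_antidiagonal_choose_succ_nsmul (M := L) (fun i j => br (D^[i] a) (D^[j] b)) n]
    simp only [Function.iterate_succ_apply', ih, map_sum, map_nsmul, hD, smul_add,
      sum_add_distrib]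
    rw [add_comm]
    congr 1
    refine sum_congr rfl fun ⟨i, j⟩ hij ↦ ?_
    rw [n.choose_symm_of_eq_add (mem_antidiagonal.1 hij).symm]

/-- If `D` raises `a` and `b` out of the ideal `S` only at the `m`-th step, then `[a, b]` leaves
`S` only at the `2m`-th step, and there modulo `S` only the middle binomial term survives. -/
theorem iterate_derivation_mod {D : L →ₗ[F] L}
    (hD : ∀ a b, D (br a b) = br (D a) b + br a (D b)) {S K : Submodule F L}
    (hS : IsIdealOf br S K) {a b : L} (ha : ∀ i, D^[i] a ∈ K) (hb : ∀ i, D^[i] b ∈ K) {m : ℕ}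
    (ha' : ∀ i < m, D^[i] a ∈ S) (hb' : ∀ i < m, D^[i] b ∈ S) :
    (∀ j < m + m, D^[j] (br a b) ∈ S) ∧
      D^[m + m] (br a b) - (m + m).choose m • br (D^[m] a) (D^[m] b) ∈ S := by
  have key : ∀ i j, i < m ∨ j < m → br (D^[i] a) (D^[j] b) ∈ S := by
    rintro i j (h | h)
    · exact (hS.2 _ (ha' i h) _ (hb j)).1
    · exact (hS.2 _ (hb' j h) _ (ha i)).2
  constructor
  · intro j hj
    rw [iterate_derivation hD]
    refine sum_mem fun ij hij => nsmul_mem (key _ _ ?_) _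
    have := Finset.HasAntidiagonal.mem_antidiagonal.1 hij
    omega
  · rw [iterate_derivation hD, ← Finset.add_sum_erase _ _
      (Finset.HasAntidiagonal.mem_antidiagonal.2 (rfl : (m, m).1 + (m, m).2 = m + m)), add_sub_cancel_left]
    refine sum_mem fun ij hij => nsmul_mem (key _ _ ?_) _
    obtain ⟨hne, hij⟩ := Finset.mem_erase.1 hij
    have := Finset.HasAntidiagonal.mem_antidiagonal.1 hij
    by_contra! hcon
    exact hne (Prod.ext (by simp; omega) (by simp; omega))

/-- In characteristic zero, adding to a solvable ideal `S` of `K` its image under a derivation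
keeps it solvable: modulo `S`, the `k`-th derived term of `S + D S` consists of elements
`D ^ (2 ^ k) s` with `s` in the `k`-th derived term of `S`. -/
theorem solvable_sup_map_derivation [CharZero F] (hbr : IsLeibnizBracket br) {D : L →ₗ[F] L}
    (hD : ∀ a b, D (br a b) = br (D a) b + br a (D b)) {S K : Submodule F L}
    (hS : IsIdealOf br S K) (hDK : ∀ x ∈ K, D x ∈ K) (hsol : IsSolvableSub br S) :
    IsSolvableSub br (S ⊔ S.map D) := by
  have hSK : ∀ k, ∀ s ∈ derSeriesOf br S k, ∀ i, D^[i] s ∈ K := by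
    intro k s hs i
    induction i with
    | zero => exact (hS.derSeriesOf hbr k).1 hs
    | succ i ih => rw [Function.iterate_succ_apply']; exact hDK _ ih
  have hlow : ∀ k, ∀ s ∈ derSeriesOf br S k, ∀ j < 2 ^ k, D^[j] s ∈ S := by
    intro k
    induction k with
    | zero =>
      intro s hs j hj
      obtain rfl : j = 0 := by simpa using hj
      exact hs
    | succ k ih =>
      intro s hs j hj
      have hle : derSeriesOf br S (k + 1) ≤ S.comap (D ^ j) := by
        refine brSpan_le.2 fun a ha b hb => ?_
        rw [mem_comap, Module.End.pow_apply]
        exact (iterate_derivation_mod hD hS (hSK k a ha) (hSK k b hb) (ih a ha) (ih b hb)).1 j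
          (by rw [pow_succ] at hj; omega)
      have := hle hs
      rwa [mem_comap, Module.End.pow_apply] at this
  have hT : ∀ k, derSeriesOf br (S ⊔ S.map D) k ≤
      S ⊔ (derSeriesOf br S k).map (D ^ (2 ^ k)) := by
    intro k
    induction k with
    | zero => simp [derSeriesOf]
    | succ k ih =>
      refine brSpan_le.2 fun x hx y hy => ?_
      obtain ⟨s, hs, _, ⟨a, ha, rfl⟩, rfl⟩ := mem_sup.1 (ih hx)
      obtain ⟨t, ht, _, ⟨b, hb, rfl⟩, rfl⟩ := mem_sup.1 (ih hy)
      simp only [Module.End.pow_apply]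
      have hmod := (iterate_derivation_mod hD hS (hSK k a ha) (hSK k b hb)
        (hlow k a ha) (hlow k b hb)).2
      set m := 2 ^ k with hm
      have e : br (s + D^[m] a) (t + D^[m] b) =
          br s (t + D^[m] b) + br (D^[m] a) t + br (D^[m] a) (D^[m] b) := by
        simp only [map_add, LinearMap.add_apply]; abel
      rw [e]
      refine add_mem (mem_sup_left (add_mem ?_ ?_)) ?_
      · exact (hS.2 s hs _ (add_mem (hS.1 ht) (hSK k b hb m))).1
      · exact (hS.2 t ht _ (hSK k a ha m)).2
      · have hc : ((m + m).choose m : F) ≠ 0 :=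
          Nat.cast_ne_zero.2 (Nat.choose_pos (Nat.le_add_left m m)).ne'
        have hmem : ((m + m).choose m : F) • br (D^[m] a) (D^[m] b) ∈
            S ⊔ (derSeriesOf br S (k + 1)).map (D ^ (2 ^ (k + 1))) := by
          rw [Nat.cast_smul_eq_nsmul, ← sub_sub_cancel (D^[m + m] (br a b))
            ((m + m).choose m • br (D^[m] a) (D^[m] b))]
          refine sub_mem (mem_sup_right ⟨br a b, br_mem_brSpan ha hb, ?_⟩) (mem_sup_left hmod)
          rw [Module.End.pow_apply, pow_succ, mul_two]
        exact (smul_mem_iff _ hc).1 hmem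
  obtain ⟨n, hn⟩ := hsol
  refine ⟨n + n, eq_bot_iff.2 ?_⟩
  rw [derSeriesOf_add]
  refine (derSeriesOf_mono ?_ n).trans hn.le
  simpa [hn] using hT n

theorem isIdealOf_sup_map_derivation {D : L →ₗ[F] L}
    (hD : ∀ a b, D (br a b) = br (D a) b + br a (D b)) {S K : Submodule F L}
    (hS : IsIdealOf br S K) (hDK : ∀ x ∈ K, D x ∈ K) : IsIdealOf br (S ⊔ S.map D) K := by
  refine ⟨sup_le hS.1 ?_, fun x hx y hy => ?_⟩
  · rintro _ ⟨s, hs, rfl⟩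
    exact hDK s (hS.1 hs)
  · obtain ⟨s, hs, _, ⟨t, ht, rfl⟩, rfl⟩ := mem_sup.1 hx
    have e1 : br (s + D t) y = (br s y - br t (D y)) + D (br t y) := by
      rw [hD]; simp only [map_add, LinearMap.add_apply]; abel
    have e2 : br y (s + D t) = (br y s - br (D y) t) + D (br y t) := by
      rw [hD]; simp only [map_add]; abel
    rw [e1, e2]
    exact ⟨add_mem (mem_sup_left (sub_mem (hS.2 s hs y hy).1 (hS.2 t ht _ (hDK y hy)).1))
        (mem_sup_right ⟨_, (hS.2 t ht y hy).1, rfl⟩),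
      add_mem (mem_sup_left (sub_mem (hS.2 s hs y hy).2 (hS.2 t ht _ (hDK y hy)).2))
        (mem_sup_right ⟨_, (hS.2 t ht y hy).2, rfl⟩)⟩

theorem br_swap (halt : ∀ x, br x x = 0) (x y : L) : br x y = -br y x := by
  have := halt (x + y)
  simp only [map_add, LinearMap.add_apply, halt, zero_add, add_zero] at this
  exact eq_neg_of_add_eq_zero_right this

/-- Passing from `A ⊴ B`, with `C` inside a solvable ideal of `A`, to a solvable ideal of `B`: a
maximal solvable ideal of `A` containing `C` is stable under the derivations `[·, y]`, `y ∈ B`. -/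
theorem exists_solvable_ideal_step [CharZero F] [FiniteDimensional F L]
    (hbr : IsLeibnizBracket br) (halt : ∀ x, br x x = 0) {A B C : Submodule F L}
    (hAB : IsIdealOf br A B)
    (h : ∃ S, IsIdealOf br S A ∧ IsSolvableSub br S ∧ C ≤ S) :
    ∃ S, IsIdealOf br S B ∧ IsSolvableSub br S ∧ C ≤ S := by
  obtain ⟨S, ⟨hSA, hSsol, hCS⟩, hmax⟩ := WellFounded.has_min
    (wellFounded_gt (α := Submodule F L))
    {S | IsIdealOf br S A ∧ IsSolvableSub br S ∧ C ≤ S} h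
  refine ⟨S, ⟨hSA.1.trans hAB.1, fun s hs y hy => ?_⟩, hSsol, hCS⟩
  have hD : ∀ a b, br.flip y (br a b) = br (br.flip y a) b + br a (br.flip y b) := by
    intro a b
    simp only [LinearMap.flip_apply]
    rw [hbr a b y]; abel
  have hDA : ∀ x ∈ A, br.flip y x ∈ A := fun x hx => (hAB.2 x hx y hy).1
  have hTS : S ⊔ S.map (br.flip y) ≤ S := by
    by_contra hcon
    exact hmax _ ⟨isIdealOf_sup_map_derivation hD hSA hDA,
      solvable_sup_map_derivation hbr hD hSA hDA hSsol, hCS.trans le_sup_left⟩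
      (lt_of_le_not_ge le_sup_left hcon)
  have h1 : br s y ∈ S := hTS (mem_sup_right ⟨s, hs, rfl⟩)
  exact ⟨h1, by rw [br_swap halt]; exact neg_mem h1⟩

/-- A solvable subideal lies in a solvable ideal, by climbing the chain of the subideal. -/
theorem exists_solvable_ideal_of_subideal [CharZero F] [FiniteDimensional F L]
    (hbr : IsLeibnizBracket br) (halt : ∀ x, br x x = 0) {C : Submodule F L}
    (hC : IsSubideal br C) (hCs : IsSubalg br C) (hsol : IsSolvableSub br C) :
    ∃ S, IsLeibIdeal br S ∧ IsSolvableSub br S ∧ C ≤ S := by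
  obtain ⟨n, ch, h0, hn, hch⟩ := hC
  have : ∀ i ≤ n, ∃ S, IsIdealOf br S (ch i) ∧ IsSolvableSub br S ∧ C ≤ S := by
    intro i
    induction i with
    | zero => exact fun _ => ⟨C, h0.symm ▸ isIdealOf_self hCs, hsol, le_rfl⟩
    | succ i ih =>
      exact fun hi => exists_solvable_ideal_step hbr halt (hch i hi) (ih (by omega))
  have := this n le_rfl
  rwa [hn] at this

/-- Perfect ideals of ideals are ideals. -/
theorem isIdealOf_of_perfect (hbr : IsLeibnizBracket br) {R A B : Submodule F L}
    (hR : brSpan br R R = R) (hRA : IsIdealOf br R A) (hAB : IsIdealOf br A B) :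
    IsIdealOf br R B := by
  refine ⟨hRA.1.trans hAB.1, fun z hz y hy => ?_⟩
  have h1 : brSpan br R R ≤ R.comap (br.flip y) := by
    refine brSpan_le.2 fun a ha b hb => ?_
    have e : br (br a b) y = br a (br b y) + br (br a y) b := by rw [hbr a b y]; abel
    rw [mem_comap, LinearMap.flip_apply, e]
    exact add_mem (hRA.2 a ha _ (hAB.2 b (hRA.1 hb) y hy).1).1
      (hRA.2 b hb _ (hAB.2 a (hRA.1 ha) y hy).1).2
  have h2 : brSpan br R R ≤ R.comap (br y) := by
    refine brSpan_le.2 fun a ha b hb => ?_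
    rw [mem_comap, hbr y a b]
    exact sub_mem (hRA.2 b hb _ (hAB.2 a (hRA.1 ha) y hy).2).2
      (hRA.2 a ha _ (hAB.2 b (hRA.1 hb) y hy).2).2
  rw [hR] at h1 h2
  exact ⟨h1 hz, h2 hz⟩

/-- If every nonzero ideal of the Lie algebra `L` contains the perfect ideal `P ≠ 0`, so does every
nonzero subideal `C`: either the perfect residual of `C` is a nonzero ideal of `L`, or `C` is
solvable and hence inside a solvable ideal of `L`, which cannot contain `P`. -/
theorem perfect_le_subideal [CharZero F] [FiniteDimensional F L]
    (hbr : IsLeibnizBracket br) (halt : ∀ x, br x x = 0) {P C : Submodule F L}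
    (hP : brSpan br P P = P) (hP0 : P ≠ ⊥)
    (hmin : ∀ A, IsLeibIdeal br A → A ≠ ⊥ → P ≤ A)
    (hC : IsSubideal br C) (hC0 : C ≠ ⊥) : P ≤ C := by
  have hCs : IsSubalg br C := by
    obtain ⟨n, ch, h0, hn, hch⟩ := hC
    rcases Nat.eq_zero_or_pos n with rfl | hpos
    · rw [← h0, hn]; exact isLeibIdeal_top.isSubalg
    · exact h0 ▸ (hch 0 hpos).isSubalg
  obtain ⟨k, hk⟩ := (isIdealOf_self hCs).exists_perfect hbr
  by_cases hR0 : derSeriesOf br C k = ⊥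
  · obtain ⟨S, hS, ⟨j, hj⟩, hCS⟩ := exists_solvable_ideal_of_subideal hbr halt hC hCs ⟨k, hR0⟩
    have hPS := hmin S hS fun h => hC0 (eq_bot_iff.2 (h ▸ hCS))
    exact absurd (eq_bot_iff.2 (hj ▸ le_derSeriesOf_of_perfect hP hPS j)) hP0
  · have hRC := (isIdealOf_self hCs).derSeriesOf hbr k
    obtain ⟨n, ch, h0, hn, hch⟩ := hC
    have : ∀ i ≤ n, IsIdealOf br (derSeriesOf br C k) (ch i) := by
      intro i
      induction i with
      | zero => exact fun _ => h0.symm ▸ hRC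
      | succ i ih =>
        exact fun hi => isIdealOf_of_perfect hbr hk (ih (by omega)) (hch i hi)
    have hR := this n le_rfl
    rw [hn] at hR
    exact (hmin _ hR hR0).trans hRC.1

end Radical

/-! ### Engel subalgebras and the perfect monolith -/

section Engel

/-- The Engel subalgebra `E` of a non-ad-nilpotent `x ∈ P`, which exists by Engel's theorem since
`P` is not nilpotent, together with `P` spans everything because `[x, 𝔤] ⊆ P`. -/
theorem exists_proper_supplement {𝔤 : Type*} [LieRing 𝔤] [LieAlgebra F 𝔤] [FiniteDimensional F 𝔤]
    (P : Submodule F 𝔤) (hP : ∀ x : 𝔤, ∀ y ∈ P, ⁅x, y⁆ ∈ P)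
    (hperf : P ≤ span F {z | ∃ x ∈ P, ∃ y ∈ P, z = ⁅x, y⁆}) (hP0 : P ≠ ⊥) :
    ∃ x ∈ P, x ≠ 0 ∧ ∃ E : Submodule F 𝔤,
      x ∈ E ∧ (∀ a ∈ E, ∀ b ∈ E, ⁅a, b⁆ ∈ E) ∧ E ≠ ⊤ ∧ E ⊔ P = ⊤ := by
  let I : LieIdeal F 𝔤 := { P with lie_mem := fun {x m} hm => hP x m hm }
  have hex : ∃ x ∈ P, ¬ IsNilpotent (LieAlgebra.ad F 𝔤 x) := by
    by_contra! hcon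
    have hnil : LieModule.IsNilpotent I 𝔤 :=
      (LieModule.isNilpotent_iff_forall (R := F)).2 fun x => hcon x x.2
    obtain ⟨k, hk⟩ := (LieModule.isNilpotent_iff F I 𝔤).1 hnil
    have hle : ∀ k, P ≤ (LieModule.lowerCentralSeries F I 𝔤 k).toSubmodule := by
      intro k
      induction k with
      | zero => simp
      | succ k ih =>
        refine hperf.trans (span_le.2 ?_)
        rintro _ ⟨x, hx, y, hy, rfl⟩
        rw [LieModule.lowerCentralSeries_succ]
        exact LieSubmodule.lie_mem_lie (LieSubmodule.mem_top (⟨x, hx⟩ : I)) (ih hy)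
    apply hP0
    rw [eq_bot_iff]
    simpa [hk] using hle k
  obtain ⟨x, hx, hxn⟩ := hex
  refine ⟨x, hx, ?_, (LieSubalgebra.engel F x).toSubmodule, LieSubalgebra.self_mem_engel F x,
    fun a ha b hb => (LieSubalgebra.engel F x).lie_mem ha hb, fun htop => hxn ?_, ?_⟩
  · rintro rfl
    exact hxn (by simp)
  · rw [Module.End.isNilpotent_iff_of_finite]
    intro y
    have hy : y ∈ (LieSubalgebra.engel F x).toSubmodule := htop ▸ mem_top
    exact (LieSubalgebra.mem_engel_iff F x y).1 hy
  · obtain ⟨n, hn, hn1⟩ := ((LieAlgebra.ad F 𝔤 x).eventually_isCompl_ker_pow_range_pow.and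
      (Filter.eventually_ge_atTop 1)).exists
    rw [eq_top_iff, ← hn.sup_eq_top]
    refine sup_le_sup (fun y hy => (LieSubalgebra.mem_engel_iff F x y).2 ⟨n, hy⟩) ?_
    rintro _ ⟨y, rfl⟩
    obtain ⟨m, rfl⟩ := Nat.exists_eq_add_of_le' hn1
    rw [pow_succ', Module.End.mul_apply, LieAlgebra.ad_apply, ← lie_skew]
    exact neg_mem (hP _ _ hx)

variable {br : L →ₗ[F] L →ₗ[F] L}

/-- An alternating Leibniz bracket is a Lie bracket. -/
abbrev lieRingOfAlternating (hbr : IsLeibnizBracket br) (halt : ∀ x, br x x = 0) : LieRing L :=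
  { (inferInstance : AddCommGroup L) with
    bracket := fun x y => br x y
    add_lie := fun x y z => by simp
    lie_add := fun x y z => by simp
    lie_self := halt
    leibniz_lie := fun x y z => by
      change br x (br y z) = br (br x y) z + br y (br x z)
      rw [hbr x y z, br_swap halt y (br x z)]; abel }

theorem exists_proper_supplement_of_perfect [FiniteDimensional F L] (hbr : IsLeibnizBracket br)
    (halt : ∀ x, br x x = 0) {P : Submodule F L} (hPi : IsLeibIdeal br P)
    (hP : brSpan br P P = P) (hP0 : P ≠ ⊥) :
    ∃ x ∈ P, x ≠ 0 ∧ ∃ E : Submodule F L,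
      x ∈ E ∧ IsSubalg br E ∧ E ≠ ⊤ ∧ E ⊔ P = ⊤ := by
  let _ : LieRing L := lieRingOfAlternating hbr halt
  let _ : LieAlgebra F L :=
    { (inferInstance : Module F L) with
      lie_smul := fun t x y => (br x).map_smul t y }
  exact exists_proper_supplement P (fun x y hy => (hPi.2 y hy x trivial).2) hP.ge hP0

theorem exists_maximal_subalg [FiniteDimensional F L] {E : Submodule F L} (hE : IsSubalg br E)
    (h : E ≠ ⊤) : ∃ M, IsMaximalSubalg br M ∧ E ≤ M := by
  obtain ⟨M, ⟨hM, hEM, hMt⟩, hmax⟩ := WellFounded.has_min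
    (wellFounded_gt (α := Submodule F L)) {K | IsSubalg br K ∧ E ≤ K ∧ K ≠ ⊤} ⟨E, hE, le_rfl, h⟩
  refine ⟨M, ⟨hM, lt_top_iff_ne_top.2 hMt, fun K hK hMK _ => ?_⟩, hEM⟩
  by_contra! hcon
  exact hmax K ⟨hK, hEM.trans hMK, hcon.2⟩ (lt_of_le_of_ne hMK hcon.1.symm)

theorem br_square_right (hbr : IsLeibnizBracket br) (x y : L) : br x (br y y) = 0 := by
  rw [hbr x y y, sub_self]

theorem leibnizKernel_isIdeal (hbr : IsLeibnizBracket br) : IsLeibIdeal br (leibnizKernel br) := by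
  refine ⟨le_top, fun z hz y _ => ?_⟩
  have h1 : leibnizKernel br ≤ (leibnizKernel br).comap (br.flip y) := by
    refine span_le.2 ?_
    rintro _ ⟨x, rfl⟩
    -- `[x², y] = (y + x²)² - y²`, since `[·, x²] = 0`
    have e : br (br x x) y = br (y + br x x) (y + br x x) - br y y := by
      simp only [map_add, LinearMap.add_apply, br_square_right hbr]; abel
    change br (br x x) y ∈ leibnizKernel br
    rw [e]
    exact sub_mem (subset_span ⟨_, rfl⟩) (subset_span ⟨_, rfl⟩)
  have h2 : leibnizKernel br ≤ (leibnizKernel br).comap (br y) := by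
    refine span_le.2 ?_
    rintro _ ⟨x, rfl⟩
    change br y (br x x) ∈ leibnizKernel br
    rw [br_square_right hbr]
    exact zero_mem _
  exact ⟨h1 hz, h2 hz⟩

theorem brSpan_leibnizKernel (hbr : IsLeibnizBracket br) :
    brSpan br (leibnizKernel br) (leibnizKernel br) = ⊥ := by
  refine eq_bot_iff.2 (brSpan_le.2 fun x _ y hy => ?_)
  have : leibnizKernel br ≤ LinearMap.ker (br x) := by
    refine span_le.2 ?_
    rintro _ ⟨z, rfl⟩
    exact br_square_right hbr x z
  exact this hy

/-- The contradiction at the heart of the converse: no algebra all of whose maximal subalgebras are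
weak c-ideals has a nonzero perfect ideal contained in every nonzero ideal. -/
theorem false_of_perfect_monolith [CharZero F] [FiniteDimensional F L]
    (hbr : IsLeibnizBracket br) {P : Submodule F L} (hPi : IsLeibIdeal br P)
    (hP : brSpan br P P = P) (hP0 : P ≠ ⊥)
    (hmin : ∀ A, IsLeibIdeal br A → A ≠ ⊥ → P ≤ A)
    (hW : ∀ M, IsMaximalSubalg br M → IsWeakCIdeal br M) : False := by
  have hker : leibnizKernel br = ⊥ := by
    by_contra hne
    have := brSpan_mono (br := br) (hmin _ (leibnizKernel_isIdeal hbr) hne)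
    rw [hP, brSpan_leibnizKernel hbr] at this
    exact hP0 (eq_bot_iff.2 this)
  have halt : ∀ x, br x x = 0 := fun x => by
    have : br x x ∈ leibnizKernel br := subset_span ⟨x, rfl⟩
    rwa [hker, mem_bot] at this
  obtain ⟨x, hxP, hx0, E, hxE, hE, hEt, hEP⟩ :=
    exists_proper_supplement_of_perfect hbr halt hPi hP hP0
  obtain ⟨M, hM, hEM⟩ := exists_maximal_subalg hE hEt
  have hPM : ¬ P ≤ M := fun h => hM.2.1.ne (eq_top_iff.2 (hEP ▸ sup_le hEM h))
  have hcore : leibCore br M = ⊥ := by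
    by_contra hne
    exact hPM ((hmin _ (leibCore_isIdeal br M) hne).trans (leibCore_le M))
  obtain ⟨-, -, C, hC, hsup, hinf⟩ := hW M hM
  have hC0 : C ≠ ⊥ := by
    rintro rfl
    exact hM.2.1.ne (by simpa using hsup)
  have hxC := perfect_le_subideal hbr halt hP hP0 hmin hC hC0 hxP
  have : x ∈ leibCore br M := hinf ⟨hEM hxE, hxC⟩
  rw [hcore, mem_bot] at this
  exact hx0 this

end Engel

/-! ### Quotients -/

section Quotient

variable {br : L →ₗ[F] L →ₗ[F] L} {N : Submodule F L} (hN : IsLeibIdeal br N)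

theorem quotBr_mkQ (x y : L) : quotBr br N hN (N.mkQ x) (N.mkQ y) = N.mkQ (br x y) := rfl

theorem isLeibnizBracket_quotBr (hbr : IsLeibnizBracket br) :
    IsLeibnizBracket (quotBr br N hN) := by
  intro x y z
  obtain ⟨x, rfl⟩ := N.mkQ_surjective x
  obtain ⟨y, rfl⟩ := N.mkQ_surjective y
  obtain ⟨z, rfl⟩ := N.mkQ_surjective z
  simp only [quotBr_mkQ]
  rw [hbr x y z, map_sub]

theorem IsIdealOf.map_mkQ {A B : Submodule F L} (h : IsIdealOf br A B) :
    IsIdealOf (quotBr br N hN) (A.map N.mkQ) (B.map N.mkQ) := by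
  refine ⟨map_mono h.1, ?_⟩
  rintro _ ⟨x, hx, rfl⟩ _ ⟨y, hy, rfl⟩
  exact ⟨⟨_, (h.2 x hx y hy).1, rfl⟩, ⟨_, (h.2 x hx y hy).2, rfl⟩⟩

theorem map_mkQ_top : (⊤ : Submodule F L).map N.mkQ = ⊤ := by
  rw [Submodule.map_top, range_mkQ]

theorem IsLeibIdeal.map_mkQ {A : Submodule F L} (h : IsLeibIdeal br A) :
    IsLeibIdeal (quotBr br N hN) (A.map N.mkQ) := by
  have := IsIdealOf.map_mkQ hN h
  rwa [map_mkQ_top] at this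

theorem IsLeibIdeal.comap_mkQ {A : Submodule F (L ⧸ N)} (h : IsLeibIdeal (quotBr br N hN) A) :
    IsLeibIdeal br (A.comap N.mkQ) :=
  ⟨le_top, fun x hx y _ => h.2 (N.mkQ x) hx (N.mkQ y) trivial⟩

theorem brSpan_map_mkQ (A B : Submodule F L) :
    brSpan (quotBr br N hN) (A.map N.mkQ) (B.map N.mkQ) = (brSpan br A B).map N.mkQ := by
  apply le_antisymm
  · refine brSpan_le.2 ?_
    rintro _ ⟨x, hx, rfl⟩ _ ⟨y, hy, rfl⟩
    exact mem_map_of_mem (br_mem_brSpan hx hy)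
  · rw [map_le_iff_le_comap]
    exact brSpan_le.2 fun x hx y hy => br_mem_brSpan (mem_map_of_mem hx) (mem_map_of_mem hy)

theorem IsMaximalSubalg.comap_mkQ {M : Submodule F (L ⧸ N)}
    (hM : IsMaximalSubalg (quotBr br N hN) M) : IsMaximalSubalg br (M.comap N.mkQ) := by
  have hsurj := N.mkQ_surjective
  refine ⟨fun x hx y hy => hM.1 _ hx _ hy, lt_top_iff_ne_top.2 fun h => hM.2.1.ne ?_,
    fun K hK hMK _ => ?_⟩
  · rw [← map_comap_eq_of_surjective hsurj M, h, map_mkQ_top]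
  · have hNK : N ≤ K := fun x hx => hMK (by
      rw [mem_comap, mkQ_apply, (Quotient.mk_eq_zero N).2 hx]; exact zero_mem M)
    have hKK : (K.map N.mkQ).comap N.mkQ = K := by
      rw [comap_map_mkQ, sup_eq_right.2 hNK]
    have hsub : IsSubalg (quotBr br N hN) (K.map N.mkQ) :=
      (IsIdealOf.map_mkQ hN (isIdealOf_self hK)).isSubalg
    have hle : M ≤ K.map N.mkQ := by
      rw [← map_comap_eq_of_surjective hsurj M]
      exact map_mono hMK
    rcases hM.2.2 _ hsub hle le_top with h | h
    · left; rw [← h, hKK]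
    · right; rw [← hKK, h, comap_top]

theorem isWeakCIdeal_of_comap_mkQ {M : Submodule F (L ⧸ N)}
    (h : IsWeakCIdeal br (M.comap N.mkQ)) : IsWeakCIdeal (quotBr br N hN) M := by
  have hMM := map_comap_eq_of_surjective N.mkQ_surjective M
  obtain ⟨hs, -, C, ⟨n, ch, h0, hn, hch⟩, hsup, hinf⟩ := h
  have hs' := (IsIdealOf.map_mkQ hN (isIdealOf_self hs)).isSubalg
  rw [hMM] at hs'
  refine ⟨hs', le_top, C.map N.mkQ, ⟨n, fun i => (ch i).map N.mkQ, congrArg _ h0,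
    (congrArg _ hn).trans map_mkQ_top, fun i hi => IsIdealOf.map_mkQ hN (hch i hi)⟩, ?_, ?_⟩
  · rw [← hMM, ← Submodule.map_sup, hsup, map_mkQ_top]
  · rintro _ ⟨hM, c, hc, rfl⟩
    refine IsLeibIdeal.le_leibCore (IsLeibIdeal.map_mkQ hN (leibCore_isIdeal br (M.comap N.mkQ))) ?_
      ⟨c, hinf ⟨hM, hc⟩, rfl⟩
    exact map_le_iff_le_comap.2 (leibCore_le _)

end Quotient

/-- Factoring out an ideal `N` maximal among those not containing the perfect residual `P` of a
non-solvable `L` turns `P` into a perfect ideal inside every nonzero ideal. -/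
theorem solvable_of_isWeakCIdeal [CharZero F] [FiniteDimensional F L]
    {br : L →ₗ[F] L →ₗ[F] L} (hbr : IsLeibnizBracket br)
    (hW : ∀ M : Submodule F L, IsMaximalSubalg br M → IsWeakCIdeal br M) :
    IsSolvableSub br ⊤ := by
  obtain ⟨k, hk⟩ := (isLeibIdeal_top (br := br)).exists_perfect hbr
  by_contra hns
  have hP0 : derSeriesOf br ⊤ k ≠ ⊥ := fun h => hns ⟨k, h⟩
  have hPi : IsLeibIdeal br (derSeriesOf br ⊤ k) := isLeibIdeal_top.derSeriesOf hbr k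
  set P := derSeriesOf br ⊤ k
  obtain ⟨N, ⟨hN, hPN⟩, hmax⟩ := WellFounded.has_min (wellFounded_gt (α := Submodule F L))
    {A | IsLeibIdeal br A ∧ ¬ P ≤ A} ⟨⊥, isLeibIdeal_bot, fun h => hP0 (eq_bot_iff.2 h)⟩
  refine false_of_perfect_monolith (isLeibnizBracket_quotBr hN hbr) (IsLeibIdeal.map_mkQ hN hPi)
    (by rw [brSpan_map_mkQ, hk]) ?_ ?_
    fun M hM => isWeakCIdeal_of_comap_mkQ hN (hW _ (IsMaximalSubalg.comap_mkQ hN hM))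
  · intro h
    exact hPN (by simpa using map_le_iff_le_comap.1 h.le)
  · intro A hA hA0
    rw [map_le_iff_le_comap]
    by_contra hcon
    refine hmax _ ⟨IsLeibIdeal.comap_mkQ hN hA, hcon⟩ (lt_of_le_of_ne (le_comap_mkQ N A) fun h => hA0 ?_)
    rw [← map_comap_eq_of_surjective N.mkQ_surjective A, ← h, mkQ_map_self]

/-- over a field of characteristic zero, `L` is solvable iff
every maximal subalgebra of `L` is a weak c-ideal of `L`. -/
theorem solvable_iff_all_maximal_weakCIdeal [CharZero F]
    (br : L →ₗ[F] L →ₗ[F] L) (hbr : IsLeibnizBracket br)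
    [FiniteDimensional F L] :
    IsSolvableSub br ⊤ ↔
      ∀ M : Submodule F L, IsMaximalSubalg br M → IsWeakCIdeal br M := by
  exact ⟨fun hL _ hM => isWeakCIdeal_of_solvable hbr hL hM, solvable_of_isWeakCIdeal hbr⟩
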